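/- arXiv:1608.04114 — 2 statements merged into one kernel-verified Lean document; each statement's English description precedes it below -/
import Mathlib

section
/- Let α, β > -1 and r, s ∈ ℕ with s ≤ r. There is a constant c > 0, depending only on α, β, r, such that for every f ∈ C^{r-1}[-1,1] with f^{(r)} ∈ L^2(w_{α,β}) and every n ≥ r, for all 0 ≤ k ≤ s, ‖φ^k · (f^{(k)} - (S_n^{α,β} f)^{(k)})‖_{L^2(w_{α,β})} ≤ c · n^{-r+k} · E_{n-r}(f^{(r)})_{L^2(w_{α,β})}, where φ(x) = √(1-x²). -/
open MeasureTheory Set ENNReal NNReal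

noncomputable section

namespace JacobiApprox

/-- The Jacobi weight `w_{α,β}(x) = (1-x)^α (1+x)^β` on `(-1,1)`. -/
def w (α β x : ℝ) : ℝ := (1 - x) ^ α * (1 + x) ^ β

/-- The weighted `L^p` norm `‖f‖_{L^p(w_{α,β})}`; for `p = ∞` it is the uniform
norm on `[-1,1]`. -/
def LpW (α β : ℝ) (p : ℝ≥0∞) (f : ℝ → ℝ) : ℝ :=
  if p = ⊤ then sSup ((fun x => |f x|) '' Icc (-1 : ℝ) 1)
  else (∫ x in Ioo (-1 : ℝ) 1, |f x| ^ p.toReal * w α β x) ^ (1 / p.toReal)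

/-- Membership in `L^p(w_{α,β})` (`f ∈ C[-1,1]` when `p = ∞`). -/
def MemLpW (α β : ℝ) (p : ℝ≥0∞) (f : ℝ → ℝ) : Prop :=
  Measurable f ∧
    (p ≠ ⊤ → IntegrableOn (fun x => |f x| ^ p.toReal * w α β x) (Ioo (-1 : ℝ) 1)) ∧
    (p = ⊤ → ContinuousOn f (Icc (-1 : ℝ) 1))

/-- `E_n(f)_{L^p(w_{α,β})}`: the error of best approximation of `f` by polynomials
of degree at most `n` in `L^p(w_{α,β})`. -/
def E (α β : ℝ) (p : ℝ≥0∞) (n : ℕ) (f : ℝ → ℝ) : ℝ :=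
  sInf {r : ℝ | ∃ q : Polynomial ℝ, q.natDegree ≤ n ∧
    r = LpW α β p (fun x => f x - q.eval x)}

/-- Membership in the Sobolev space `W_p^s(w_{α,β})`: `f` has `s` continuous
derivatives and `f^{(s)} ∈ L^p(w_{α,β})` (for `p = ∞` this is `f ∈ C^s[-1,1]`). -/
def MemW (α β : ℝ) (p : ℝ≥0∞) (s : ℕ) (f : ℝ → ℝ) : Prop :=
  ContDiff ℝ (s : ℕ∞) f ∧
    (p ≠ ⊤ → IntegrableOn (fun x => |iteratedDeriv s f x| ^ p.toReal * w α β x)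
      (Ioo (-1 : ℝ) 1))

/-- The Sobolev norm `‖f‖_{W_p^s(w_{α,β})}` (max over derivatives when `p = ∞`). -/
def WNorm (α β : ℝ) (p : ℝ≥0∞) (s : ℕ) (f : ℝ → ℝ) : ℝ :=
  if p = ⊤ then
    (Finset.range (s + 1)).sup' (Finset.nonempty_range_iff.mpr (Nat.succ_ne_zero s))
      (fun k => LpW α β ⊤ (iteratedDeriv k f))
  else (∑ k ∈ Finset.range (s + 1), (LpW α β p (iteratedDeriv k f)) ^ p.toReal) ^
    (1 / p.toReal)

/-- Pochhammer symbol (rising factorial) `(a)_k`. -/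
def poch (a : ℝ) (k : ℕ) : ℝ := ∏ i ∈ Finset.range k, (a + i)

/-- The Jacobi polynomial `P_n^{(α,β)}`. -/
def JP (α β : ℝ) (n : ℕ) (t : ℝ) : ℝ :=
  (poch (α + 1) n / n.factorial) *
    ∑ k ∈ Finset.range (n + 1),
      poch (-(n : ℝ)) k * poch ((n : ℝ) + α + β + 1) k /
        (poch (α + 1) k * k.factorial) * ((1 - t) / 2) ^ k

/-- The renormalized Jacobi polynomial `J_n^{α,β} = 2^n/(n+α+β+1)_n · P_n^{(α,β)}`. -/
def J (α β : ℝ) (n : ℕ) (t : ℝ) : ℝ :=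
  2 ^ n / poch ((n : ℝ) + α + β + 1) n * JP α β n t

/-- The inner product `⟨f,g⟩_{α,β} = ∫_{-1}^1 f g w_{α,β}`. -/
def ip (α β : ℝ) (f g : ℝ → ℝ) : ℝ := ∫ x in Ioo (-1 : ℝ) 1, f x * g x * w α β x

/-- `h_n^{α,β} = ⟨J_n^{α,β}, J_n^{α,β}⟩_{α,β}`. -/
def hJ (α β : ℝ) (n : ℕ) : ℝ := ip α β (J α β n) (J α β n)

/-- The Fourier–Jacobi coefficient `\hat f_n^{α,β}`. -/
def coeff (α β : ℝ) (n : ℕ) (f : ℝ → ℝ) : ℝ := ip α β f (J α β n) / hJ α β n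

/-- The `n`-th partial sum `S_n^{α,β} f` of the Fourier–Jacobi series. -/
def S (α β : ℝ) (n : ℕ) (f : ℝ → ℝ) (x : ℝ) : ℝ :=
  ∑ k ∈ Finset.range (n + 1), coeff α β k f * J α β k x

/-- An admissible cut-off function: `C^∞`, `η ≡ 1` on `[0,1]`, `η ≡ 0` on `[2,∞)`. -/
def Admissible (η : ℝ → ℝ) : Prop :=
  ContDiff ℝ (⊤ : ℕ∞) η ∧ (∀ t : ℝ, 0 ≤ t → t ≤ 1 → η t = 1) ∧ ∀ t : ℝ, 2 ≤ t → η t = 0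

/-- The de la Vallée Poussin type operator `V_n^{α,β} f`. -/
def V (η : ℝ → ℝ) (α β : ℝ) (n : ℕ) (f : ℝ → ℝ) (x : ℝ) : ℝ :=
  ∑ k ∈ Finset.range (2 * n + 1), η ((k : ℝ) / (n : ℝ)) * coeff α β k f * J α β k x

/-- The Sobolev orthogonal polynomial `𝒥_{n,θ}^{α-s,β-s}`. -/
def SJ (α β : ℝ) (s : ℕ) (θ : ℝ) (n : ℕ) (x : ℝ) : ℝ :=
  if n < s then (x - θ) ^ n / n.factorial
  else ∫ t in θ..x, (x - t) ^ (s - 1) / (s - 1).factorial * J α β (n - s) t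

/-- The Sobolev inner product `⟨f,g⟩_{α,β}^{-s}`. -/
def ipS (α β : ℝ) (s : ℕ) (θ : ℝ) (lam : ℕ → ℝ) (f g : ℝ → ℝ) : ℝ :=
  ip α β (iteratedDeriv s f) (iteratedDeriv s g) +
    ∑ k ∈ Finset.range s, lam k * iteratedDeriv k f θ * iteratedDeriv k g θ

/-- The Fourier coefficient `\hat{𝔣}_n^{α-s,β-s}` in the Sobolev orthogonal system. -/
def coeffS (α β : ℝ) (s : ℕ) (θ : ℝ) (lam : ℕ → ℝ) (n : ℕ) (f : ℝ → ℝ) : ℝ :=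
  ipS α β s θ lam f (SJ α β s θ n) / ipS α β s θ lam (SJ α β s θ n) (SJ α β s θ n)

/-- The `n`-th partial sum `𝒮_{n,θ}^{α-s,β-s} f` of the Sobolev orthogonal expansion. -/
def SS (α β : ℝ) (s : ℕ) (θ : ℝ) (lam : ℕ → ℝ) (n : ℕ) (f : ℝ → ℝ) (x : ℝ) : ℝ :=
  ∑ k ∈ Finset.range (n + 1), coeffS α β s θ lam k f * SJ α β s θ k x

/-- The operator `𝒱_{n,θ}^{α-s,β-s} f`. -/
def VS (η : ℝ → ℝ) (α β : ℝ) (s : ℕ) (θ : ℝ) (n : ℕ) (f : ℝ → ℝ) (x : ℝ) : ℝ :=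
  (∑ k ∈ Finset.range s, iteratedDeriv k f θ * (x - θ) ^ k / k.factorial) +
    ∫ t in θ..x, (x - t) ^ (s - 1) / (s - 1).factorial *
      V η α β n (iteratedDeriv s f) t

/-- `A_j^{α,β} = (α+β+2)_{2j}/(α+1)_j`. -/
def Acoef (α β : ℝ) (j : ℕ) : ℝ := poch (α + β + 2) (2 * j) / poch (α + 1) j

/-- `B_n^{α,β} = (α+1)_{n+1}/(α+β+2)_{2n+1}`. -/
def Bcoef (α β : ℝ) (n : ℕ) : ℝ := poch (α + 1) (n + 1) / poch (α + β + 2) (2 * n + 1)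

/-- `D_j^{α,β} = (j+β+1)/((2j+α+β+2)(2j+α+β+3))`. -/
def Dcoef (α β : ℝ) (j : ℕ) : ℝ :=
  ((j : ℝ) + β + 1) / ((2 * (j : ℝ) + α + β + 2) * (2 * (j : ℝ) + α + β + 3))

/-- The function `u_{g,k}` of the Aubin–Nitsche duality argument. -/
def u (α β : ℝ) (s k : ℕ) (g : ℝ → ℝ) (x : ℝ) : ℝ :=
  ∫ t in (-1 : ℝ)..x, (x - t) ^ (s - 1) / (s - 1).factorial * (1 / w α β t) *
    ∫ y in t..(1 : ℝ), (y - t) ^ (s - k - 1) / (s - k - 1).factorial * g y * w α β y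

/-- The `s`-th derivative of `u_{g,k}`, given by its explicit formula. -/
def uDs (α β : ℝ) (s k : ℕ) (g : ℝ → ℝ) (x : ℝ) : ℝ :=
  (1 / w α β x) *
    ∫ y in x..(1 : ℝ), (y - x) ^ (s - k - 1) / (s - k - 1).factorial * g y * w α β y

/-!
The remainder `f - S_n f` is orthogonal to `Π_n` in `L²(w_{α,β})`. Integration by parts against the
Jacobi operator `L p = -w_{α,β}⁻¹ (w_{α+1,β+1} p')'`, which does not raise degrees, shows that
differentiation turns orthogonality to `Π_{m+1}` for the weight `w_{α,β}` into orthogonality to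
`Π_m` for `w_{α+1,β+1}`. As `L J_j = λ_j J_j` with `λ_j = j (j + α + β + 1)`, the same identity
gives the Poincaré inequality `λ_{m+1} ‖F‖²_{α,β} ≤ ‖F'‖²_{α+1,β+1}` for `F ⊥ Π_m`. Iterating it
from the `k`-th to the `r`-th derivative of the remainder gains a factor `n` at each step, and
`(f - S_n f)^{(r)}`, being orthogonal to `Π_{n-r}`, is the error of best approximation of `f^{(r)}`
for the weight `w_{α+r,β+r} = φ^{2r} w_{α,β} ≤ w_{α,β}`.
-/

section

open Filter Topology Polynomial

variable {α β : ℝ}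

/-! ### The Jacobi weight and the inner product -/

lemma w_pos {x : ℝ} (hx : x ∈ Ioo (-1 : ℝ) 1) : 0 < w α β x :=
  mul_pos (Real.rpow_pos_of_pos (by linarith [hx.2]) _)
    (Real.rpow_pos_of_pos (by linarith [hx.1]) _)

lemma w_add_natCast (k : ℕ) {x : ℝ} (hx : x ∈ Ioo (-1 : ℝ) 1) :
    w (α + k) (β + k) x = (1 - x ^ 2) ^ k * w α β x := by
  unfold w
  rw [Real.rpow_add_natCast (by linarith [hx.2]), Real.rpow_add_natCast (by linarith [hx.1]),
    show 1 - x ^ 2 = (1 - x) * (1 + x) by ring, mul_pow]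
  ring

lemma intervalIntegrable_w (hα : -1 < α) (hβ : -1 < β) :
    IntervalIntegrable (w α β) volume (-1) 1 := by
  have hleft : IntervalIntegrable (w α β) volume (-1) 0 := by
    have h : IntervalIntegrable (fun x : ℝ => (1 + x) ^ β) volume (-1) 0 := by
      simpa using (intervalIntegral.intervalIntegrable_rpow' (a := 0) (b := 1) hβ).comp_add_left 1
    refine h.continuousOn_mul (ContinuousOn.rpow_const (by fun_prop) fun x hx => Or.inl ?_)
    rw [uIcc_of_le (by norm_num)] at hx
    linarith [hx.2]
  have hright : IntervalIntegrable (w α β) volume 0 1 := by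
    have h : IntervalIntegrable (fun x : ℝ => (1 - x) ^ α) volume 0 1 := by
      simpa using (intervalIntegral.intervalIntegrable_rpow' (a := 1) (b := 0) hα).comp_sub_left 1
    refine h.mul_continuousOn (ContinuousOn.rpow_const (by fun_prop) fun x hx => Or.inl ?_)
    rw [uIcc_of_le (by norm_num)] at hx
    linarith [hx.1]
  exact hleft.trans hright

lemma intervalIntegrable_mul_w (hα : -1 < α) (hβ : -1 < β) {g : ℝ → ℝ} (hg : Continuous g) :
    IntervalIntegrable (fun x => g x * w α β x) volume (-1) 1 :=
  (intervalIntegrable_w hα hβ).continuousOn_mul hg.continuousOn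

lemma integrableOn_mul_w (hα : -1 < α) (hβ : -1 < β) {g : ℝ → ℝ} (hg : Continuous g) :
    IntegrableOn (fun x => g x * w α β x) (Ioo (-1) 1) :=
  (intervalIntegrable_iff_integrableOn_Ioo_of_le (by norm_num)).1
    (intervalIntegrable_mul_w hα hβ hg)

lemma ip_eq_intervalIntegral (f g : ℝ → ℝ) :
    ip α β f g = ∫ x in (-1 : ℝ)..1, f x * g x * w α β x := by
  rw [intervalIntegral.integral_of_le (by norm_num), integral_Ioc_eq_integral_Ioo, ip]

lemma ip_comm (f g : ℝ → ℝ) : ip α β f g = ip α β g f := by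
  simp only [ip, mul_comm (f _)]

lemma ip_add_left (hα : -1 < α) (hβ : -1 < β) {f g h : ℝ → ℝ} (hf : Continuous f)
    (hg : Continuous g) (hh : Continuous h) : ip α β (f + g) h = ip α β f h + ip α β g h := by
  simp only [ip, Pi.add_apply, add_mul]
  exact integral_add (integrableOn_mul_w hα hβ (hf.mul hh)) (integrableOn_mul_w hα hβ (hg.mul hh))

lemma ip_smul_left (c : ℝ) (f g : ℝ → ℝ) : ip α β (c • f) g = c * ip α β f g := by
  simp only [ip, Pi.smul_apply, smul_eq_mul, mul_assoc, integral_const_mul]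

lemma ip_sub_left (hα : -1 < α) (hβ : -1 < β) {f g h : ℝ → ℝ} (hf : Continuous f)
    (hg : Continuous g) (hh : Continuous h) : ip α β (f - g) h = ip α β f h - ip α β g h := by
  simp only [ip, Pi.sub_apply, sub_mul]
  exact integral_sub (integrableOn_mul_w hα hβ (hf.mul hh)) (integrableOn_mul_w hα hβ (hg.mul hh))

lemma ip_self_nonneg (f : ℝ → ℝ) : 0 ≤ ip α β f f :=
  setIntegral_nonneg measurableSet_Ioo fun _ hx => mul_nonneg (mul_self_nonneg _) (w_pos hx).le

lemma ip_self_le_of_abs_le (hα : -1 < α) (hβ : -1 < β) {f g : ℝ → ℝ} (hf : Continuous f)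
    (hg : Continuous g) (hfg : ∀ x ∈ Ioo (-1 : ℝ) 1, |f x| ≤ |g x|) : ip α β f f ≤ ip α β g g :=
  setIntegral_mono_on (integrableOn_mul_w hα hβ (hf.mul hf)) (integrableOn_mul_w hα hβ (hg.mul hg))
    measurableSet_Ioo fun x hx =>
      mul_le_mul_of_nonneg_right (abs_le_iff_mul_self_le.1 (hfg x hx)) (w_pos hx).le

lemma ip_add_self_of_ip_eq_zero (hα : -1 < α) (hβ : -1 < β) {f g : ℝ → ℝ} (hf : Continuous f)
    (hg : Continuous g) (h : ip α β f g = 0) :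
    ip α β (f + g) (f + g) = ip α β f f + ip α β g g := by
  rw [ip_add_left hα hβ hf hg (hf.add hg), ip_comm f, ip_comm g, ip_add_left hα hβ hf hg hf,
    ip_add_left hα hβ hf hg hg, ip_comm g f, h]
  ring

lemma ip_eval_self_pos (hα : -1 < α) (hβ : -1 < β) {p : ℝ[X]} (hp : p ≠ 0) :
    0 < ip α β (p.eval ·) (p.eval ·) := by
  rw [ip, setIntegral_pos_iff_support_of_nonneg_ae
    (ae_restrict_of_forall_mem measurableSet_Ioo fun x hx =>
      mul_nonneg (mul_self_nonneg _) (w_pos hx).le)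
    (integrableOn_mul_w hα hβ (by fun_prop))]
  have hsupp : Ioo (-1 : ℝ) 1 \ {x | p.IsRoot x} ⊆
      (Function.support fun x => p.eval x * p.eval x * w α β x) ∩ Ioo (-1) 1 := fun x hx =>
    ⟨mul_ne_zero (mul_self_ne_zero.2 hx.2) (w_pos hx.1).ne', hx.1⟩
  refine lt_of_lt_of_le ?_ (measure_mono hsupp)
  rw [measure_sdiff_null ((finite_setOfPred_isRoot hp).measure_zero volume), Real.volume_Ioo]
  norm_num

/-- The linear functional `q ↦ ⟨f, q⟩` on polynomials. -/
def ipPoly (hα : -1 < α) (hβ : -1 < β) {f : ℝ → ℝ} (hf : Continuous f) : ℝ[X] →ₗ[ℝ] ℝ where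
  toFun q := ip α β f (q.eval ·)
  map_add' p q := by
    simp only [ip_comm f, eval_add]
    exact ip_add_left hα hβ p.continuous q.continuous hf
  map_smul' c p := by
    simp only [ip_comm f, eval_smul]
    exact ip_smul_left c _ f

lemma ip_eval_sum_smul (hα : -1 < α) (hβ : -1 < β) {f : ℝ → ℝ} (hf : Continuous f) (s : Finset ℕ)
    (c : ℕ → ℝ) (p : ℕ → ℝ[X]) :
    ip α β f ((∑ k ∈ s, c k • p k).eval ·) = ∑ k ∈ s, c k * ip α β f ((p k).eval ·) := by
  have h := map_sum (ipPoly hα hβ hf) (fun k => c k • p k) s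
  simp only [map_smul] at h
  exact h

lemma exists_ip_sub_eval_lt (hα : -1 < α) (hβ : -1 < β) {f : ℝ → ℝ} (hf : Continuous f) {ε : ℝ}
    (hε : 0 < ε) : ∃ q : ℝ[X], ip α β (f - (q.eval ·)) (f - (q.eval ·)) < ε := by
  obtain ⟨c, hc, hcε⟩ := exists_pos_mul_lt hε (ip α β 1 1)
  obtain ⟨q, hq⟩ := exists_polynomial_near_of_continuousOn (-1) 1 f hf.continuousOn (√c)
    (Real.sqrt_pos.2 hc)
  refine ⟨q, ?_⟩
  calc ip α β (f - (q.eval ·)) (f - (q.eval ·))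
      ≤ ip α β (√c • 1) (√c • 1) := by
        refine ip_self_le_of_abs_le hα hβ (by fun_prop) (by fun_prop) fun x hx => ?_
        simpa [abs_sub_comm, abs_of_nonneg] using (hq x (Ioo_subset_Icc_self hx)).le
    _ = ip α β 1 1 * c := by
        rw [ip_smul_left, ip_comm, ip_smul_left, ← mul_assoc, Real.mul_self_sqrt hc.le, mul_comm]
    _ < ε := hcε

/-! ### The Jacobi operator -/

/-- The Jacobi differential operator
`p ↦ -(1 - x²) p'' + (α - β + (α + β + 2) x) p' = -w_{α,β}⁻¹ (w_{α+1,β+1} p')'`. -/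
def jacobiOp (α β : ℝ) : ℝ[X] →ₗ[ℝ] ℝ[X] :=
  LinearMap.mulLeft ℝ (X ^ 2 - 1) ∘ₗ derivative ∘ₗ derivative +
    LinearMap.mulLeft ℝ (C (α - β) + C (α + β + 2) * X) ∘ₗ derivative

lemma jacobiOp_apply (p : ℝ[X]) : jacobiOp α β p =
    (X ^ 2 - 1) * derivative (derivative p) +
      (C (α - β) + C (α + β + 2) * X) * derivative p := rfl

lemma natDegree_jacobiOp_le (p : ℝ[X]) : (jacobiOp α β p).natDegree ≤ p.natDegree := by
  rw [jacobiOp_apply]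
  obtain h0 | h0 := Nat.eq_zero_or_pos p.natDegree
  · rw [eq_C_of_natDegree_eq_zero h0]
    simp
  have hp' : (derivative p).natDegree + 1 ≤ p.natDegree := by
    have := natDegree_derivative_le p
    omega
  refine natDegree_add_le_of_degree_le ?_ ((natDegree_mul_le_of_le (m := 1) ?_ le_rfl).trans ?_)
  · obtain h1 | h1 := Nat.eq_zero_or_pos (derivative p).natDegree
    · rw [eq_C_of_natDegree_eq_zero h1]
      simp
    · refine (natDegree_mul_le_of_le (m := 2) (by compute_degree)
        (natDegree_derivative_le _)).trans ?_
      omega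
  · compute_degree
  · omega

lemma continuous_w_add_one (hα : -1 < α) (hβ : -1 < β) : Continuous (w (α + 1) (β + 1)) :=
  .mul ((by fun_prop : Continuous fun x : ℝ => 1 - x).rpow_const fun _ => Or.inr (by linarith))
    ((by fun_prop : Continuous fun x : ℝ => 1 + x).rpow_const fun _ => Or.inr (by linarith))

lemma w_add_one_one (hα : -1 < α) : w (α + 1) β 1 = 0 := by
  rw [w, sub_self, Real.zero_rpow (by linarith), zero_mul]

lemma w_add_one_neg_one (hβ : -1 < β) : w α (β + 1) (-1) = 0 := by
  rw [w, add_neg_cancel, Real.zero_rpow (by linarith), mul_zero]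

lemma hasDerivAt_derivative_mul_w (q : ℝ[X]) {x : ℝ} (hx : x ∈ Ioo (-1 : ℝ) 1) :
    HasDerivAt (fun x => (derivative q).eval x * w (α + 1) (β + 1) x)
      (-((jacobiOp α β q).eval x * w α β x)) x := by
  have h1 : 0 < 1 - x := by linarith [hx.2]
  have h2 : 0 < 1 + x := by linarith [hx.1]
  have d1 := ((hasDerivAt_id x).const_sub 1).rpow_const (p := α + 1) (Or.inl h1.ne')
  have d2 := ((hasDerivAt_id x).const_add 1).rpow_const (p := β + 1) (Or.inl h2.ne')
  refine (((derivative q).hasDerivAt x).mul (d1.mul d2)).congr_deriv ?_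
  simp only [jacobiOp_apply, w, Pi.mul_apply, id, add_sub_cancel_right, eval_add, eval_sub,
    eval_mul, eval_pow, eval_X, eval_C, eval_one]
  rw [Real.rpow_add_one h1.ne', Real.rpow_add_one h2.ne']
  ring

theorem ip_deriv_derivative (hα : -1 < α) (hβ : -1 < β) {F : ℝ → ℝ} (hF : ContDiff ℝ 1 F)
    (q : ℝ[X]) :
    ip (α + 1) (β + 1) (deriv F) ((derivative q).eval ·) =
      ip α β F ((jacobiOp α β q).eval ·) := by
  have hparts := intervalIntegral.integral_mul_deriv_eq_deriv_mul_of_hasDerivAt (a := -1) (b := 1)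
    (v := fun x => (derivative q).eval x * w (α + 1) (β + 1) x) hF.continuous.continuousOn
    ((derivative q).continuous.mul (continuous_w_add_one hα hβ)).continuousOn
    (fun x _ => (hF.differentiable one_ne_zero x).hasDerivAt)
    (fun x hx => hasDerivAt_derivative_mul_w q (by simpa using hx))
    (hF.continuous_deriv_one.intervalIntegrable _ _)
    (intervalIntegrable_mul_w hα hβ (jacobiOp α β q).continuous).neg
  simp only [w_add_one_one hα, w_add_one_neg_one hβ, mul_zero, sub_zero, zero_sub, mul_neg,
    intervalIntegral.integral_neg, neg_inj, ← mul_assoc] at hparts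
  rw [ip_eq_intervalIntegral, ip_eq_intervalIntegral, hparts]

lemma contDiff_eval (p : ℝ[X]) (n : WithTop ℕ∞) : ContDiff ℝ n (p.eval ·) := by
  simpa using p.contDiff_aeval (𝕜 := ℝ) n

lemma ip_derivative_derivative (hα : -1 < α) (hβ : -1 < β) (p q : ℝ[X]) :
    ip (α + 1) (β + 1) ((derivative p).eval ·) ((derivative q).eval ·) =
      ip α β (p.eval ·) ((jacobiOp α β q).eval ·) := by
  have hp : deriv (p.eval ·) = ((derivative p).eval ·) := funext fun _ => p.deriv
  simpa only [hp] using ip_deriv_derivative hα hβ (contDiff_eval p 1) q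

/-! ### Jacobi polynomials -/

lemma poch_succ (a : ℝ) (k : ℕ) : poch a (k + 1) = poch a k * (a + k) :=
  Finset.prod_range_succ _ _

lemma poch_ne_zero {a : ℝ} {k : ℕ} (h : ∀ i < k, a + i ≠ 0) : poch a k ≠ 0 :=
  Finset.prod_ne_zero_iff.2 fun i hi => h i (Finset.mem_range.1 hi)

lemma poch_alpha_add_one_ne_zero (hα : -1 < α) (k : ℕ) : poch (α + 1) k ≠ 0 :=
  poch_ne_zero fun i _ => ne_of_gt (by linarith [i.cast_nonneg (α := ℝ)])

lemma poch_add_alpha_add_beta_add_one_ne_zero (hα : -1 < α) (hβ : -1 < β) (n : ℕ) :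
    poch (n + α + β + 1) n ≠ 0 :=
  poch_ne_zero fun i hi => by
    have hn : (i : ℝ) + 1 ≤ n := mod_cast hi
    linarith [i.cast_nonneg (α := ℝ)]

/-- The coefficient of `((1 - x) / 2) ^ k` in the hypergeometric sum defining `P_n^{(α,β)}`. -/
def jacobiCoeff (α β : ℝ) (n k : ℕ) : ℝ :=
  poch (-n) k * poch (n + α + β + 1) k / (poch (α + 1) k * k.factorial)

/-- The eigenvalue `n (n + α + β + 1)` of the Jacobi operator on `P_n^{(α,β)}`. -/
def jacobiEigenvalue (α β : ℝ) (n : ℕ) : ℝ := n * (n + α + β + 1)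

lemma jacobiEigenvalue_strictMono (hα : -1 < α) (hβ : -1 < β) :
    StrictMono (jacobiEigenvalue α β) :=
  strictMono_nat_of_lt_succ fun n => by
    simp only [jacobiEigenvalue, Nat.cast_succ]
    nlinarith [n.cast_nonneg (α := ℝ)]

lemma jacobiCoeff_succ (hα : -1 < α) (n k : ℕ) :
    jacobiCoeff α β n (k + 1) * ((k + 1) * (k + 1 + α)) =
      (jacobiEigenvalue α β k - jacobiEigenvalue α β n) * jacobiCoeff α β n k := by
  have hpoch := poch_alpha_add_one_ne_zero hα k
  have hk : α + 1 + k ≠ 0 := by linarith [k.cast_nonneg (α := ℝ)]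
  have hk' : (k : ℝ) + 1 ≠ 0 := by positivity
  simp only [jacobiCoeff, jacobiEigenvalue, poch_succ, Nat.factorial_succ, Nat.cast_mul,
    Nat.cast_succ]
  field_simp
  ring

lemma jacobiCoeff_self_ne_zero (hα : -1 < α) (hβ : -1 < β) (n : ℕ) : jacobiCoeff α β n n ≠ 0 := by
  refine div_ne_zero (mul_ne_zero (poch_ne_zero fun i hi => ?_)
    (poch_add_alpha_add_beta_add_one_ne_zero hα hβ n))
    (mul_ne_zero (poch_alpha_add_one_ne_zero hα n) (by positivity))
  have hin : (i : ℝ) < n := mod_cast hi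
  linarith

/-- The constant `2^n / (n+α+β+1)_n · (α+1)_n / n!` in front of the hypergeometric sum in
`J_n^{α,β}`. -/
def jacobiNormalization (α β : ℝ) (n : ℕ) : ℝ :=
  2 ^ n / poch (n + α + β + 1) n * (poch (α + 1) n / n.factorial)

lemma jacobiNormalization_ne_zero (hα : -1 < α) (hβ : -1 < β) (n : ℕ) :
    jacobiNormalization α β n ≠ 0 :=
  mul_ne_zero (div_ne_zero (by positivity) (poch_add_alpha_add_beta_add_one_ne_zero hα hβ n))
    (div_ne_zero (poch_alpha_add_one_ne_zero hα n) (by positivity))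

/-- The variable `(1 - x) / 2` of the hypergeometric sum, as a polynomial in `x`. -/
def jacobiVar : ℝ[X] := C (1 / 2) * (1 - X)

lemma derivative_jacobiVar : derivative jacobiVar = C (-1 / 2) := by
  rw [jacobiVar, derivative_C_mul, derivative_sub, derivative_one, derivative_X, zero_sub,
    mul_neg_one, neg_div, C_neg]

lemma degree_jacobiVar_pow (k : ℕ) : (jacobiVar ^ k).degree = k := by
  have h : jacobiVar.degree = 1 := by
    unfold jacobiVar
    compute_degree!
  rw [degree_pow, h, nsmul_one]

/-- `J_n^{α,β}` as an element of `ℝ[X]`. -/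
def jacobiPoly (α β : ℝ) (n : ℕ) : ℝ[X] :=
  jacobiNormalization α β n •
    ∑ k ∈ Finset.range (n + 1), jacobiCoeff α β n k • jacobiVar ^ k

lemma eval_jacobiPoly (n : ℕ) : ((jacobiPoly α β n).eval ·) = J α β n := by
  ext x
  simp only [jacobiPoly, jacobiVar, jacobiNormalization, jacobiCoeff, J, JP, eval_smul,
    eval_finsetSum, eval_pow, eval_mul, eval_C, eval_sub, eval_one, eval_X, smul_eq_mul, mul_assoc]
  congr! 5
  ring

lemma degree_jacobiPoly (hα : -1 < α) (hβ : -1 < β) (n : ℕ) : (jacobiPoly α β n).degree = n := by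
  have hlower : (∑ k ∈ Finset.range n, jacobiCoeff α β n k • jacobiVar ^ k).degree < n :=
    mem_degreeLT.1 <| sum_mem fun k hk => Submodule.smul_mem _ _ <| mem_degreeLT.2 <| by
      rw [degree_jacobiVar_pow]
      exact_mod_cast Finset.mem_range.1 hk
  have hlead : (jacobiCoeff α β n n • jacobiVar ^ n).degree = n := by
    rw [smul_eq_C_mul, degree_C_mul (jacobiCoeff_self_ne_zero hα hβ n), degree_jacobiVar_pow]
  rw [jacobiPoly, smul_eq_C_mul, degree_C_mul (jacobiNormalization_ne_zero hα hβ n),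
    Finset.sum_range_succ, degree_add_eq_right_of_degree_lt (by rwa [hlead]), hlead]

lemma jacobiOp_jacobiVar_pow_succ (k : ℕ) :
    jacobiOp α β (jacobiVar ^ (k + 1)) =
      jacobiEigenvalue α β (k + 1) • jacobiVar ^ (k + 1) -
        ((k + 1) * (k + 1 + α) : ℝ) • jacobiVar ^ k := by
  refine Polynomial.funext fun x => ?_
  have hx : x = 1 - 2 * jacobiVar.eval x := by
    simp only [jacobiVar, eval_mul, eval_C, eval_sub, eval_one, eval_X]
    ring
  obtain rfl | k := k
  all_goals
    simp only [jacobiOp_apply, jacobiEigenvalue, derivative_pow_succ, derivative_mul, derivative_C,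
      derivative_jacobiVar, derivative_one, eval_add, eval_sub, eval_mul, eval_pow, eval_C, eval_X,
      eval_one, eval_zero, eval_smul, smul_eq_mul, Nat.cast_succ, Nat.cast_zero, pow_zero]
    generalize jacobiVar.eval x = u at hx
    rw [hx]
    ring

lemma jacobiOp_sum_jacobiCoeff (hα : -1 < α) (n m : ℕ) :
    jacobiOp α β
        (∑ k ∈ Finset.range (m + 1), jacobiCoeff α β n k • jacobiVar ^ k) =
      jacobiEigenvalue α β n •
          (∑ k ∈ Finset.range (m + 1), jacobiCoeff α β n k • jacobiVar ^ k) +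
        ((jacobiEigenvalue α β m - jacobiEigenvalue α β n) * jacobiCoeff α β n m) •
          jacobiVar ^ m := by
  induction m with
  | zero => simp [jacobiOp_apply, jacobiEigenvalue, mul_smul]
  | succ m ih =>
    rw [Finset.sum_range_succ, map_add, ih, map_smul, jacobiOp_jacobiVar_pow_succ,
      ← jacobiCoeff_succ hα]
    module

theorem jacobiOp_jacobiPoly (hα : -1 < α) (n : ℕ) :
    jacobiOp α β (jacobiPoly α β n) = jacobiEigenvalue α β n • jacobiPoly α β n := by
  rw [jacobiPoly, map_smul, jacobiOp_sum_jacobiCoeff hα, sub_self, zero_mul, zero_smul, add_zero,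
    smul_comm]

/-- The Jacobi polynomials as a sequence of polynomials of increasing degrees. -/
def jacobiSequence (hα : -1 < α) (hβ : -1 < β) : Polynomial.Sequence ℝ where
  elems' := jacobiPoly α β
  degree_eq' := degree_jacobiPoly hα hβ

lemma jacobiPoly_ne_zero (hα : -1 < α) (hβ : -1 < β) (n : ℕ) : jacobiPoly α β n ≠ 0 :=
  (jacobiSequence hα hβ).ne_zero n

lemma natDegree_jacobiPoly (hα : -1 < α) (hβ : -1 < β) (n : ℕ) :
    (jacobiPoly α β n).natDegree = n :=
  (jacobiSequence hα hβ).natDegree_eq n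

lemma ip_jacobiPoly_eq_hJ (n : ℕ) :
    ip α β ((jacobiPoly α β n).eval ·) ((jacobiPoly α β n).eval ·) = hJ α β n := by
  rw [eval_jacobiPoly, hJ]

lemma hJ_pos (hα : -1 < α) (hβ : -1 < β) (n : ℕ) : 0 < hJ α β n := by
  rw [← ip_jacobiPoly_eq_hJ]
  exact ip_eval_self_pos hα hβ (jacobiPoly_ne_zero hα hβ n)

lemma ip_jacobiOp_jacobiPoly (hα : -1 < α) (f : ℝ → ℝ) (n : ℕ) :
    ip α β f ((jacobiOp α β (jacobiPoly α β n)).eval ·) =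
      jacobiEigenvalue α β n * ip α β f ((jacobiPoly α β n).eval ·) := by
  simp only [jacobiOp_jacobiPoly hα, eval_smul, ip_comm f]
  exact ip_smul_left _ _ _

theorem ip_jacobiPoly_of_ne (hα : -1 < α) (hβ : -1 < β) {m n : ℕ} (hmn : m ≠ n) :
    ip α β ((jacobiPoly α β m).eval ·) ((jacobiPoly α β n).eval ·) = 0 := by
  have hsymm : jacobiEigenvalue α β n *
        ip α β ((jacobiPoly α β m).eval ·) ((jacobiPoly α β n).eval ·) =
      jacobiEigenvalue α β m *
        ip α β ((jacobiPoly α β m).eval ·) ((jacobiPoly α β n).eval ·) := by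
    rw [← ip_jacobiOp_jacobiPoly hα, ← ip_derivative_derivative hα hβ, ip_comm,
      ip_derivative_derivative hα hβ, ip_jacobiOp_jacobiPoly hα, ip_comm]
  by_contra hne
  exact hmn ((jacobiEigenvalue_strictMono hα hβ).injective (mul_right_cancel₀ hne hsymm).symm)

/-! ### Orthogonality to polynomials and partial sums -/

/-- `F` is orthogonal to `Π_m` in `L²(w_{α,β})`. -/
def OrthDegreeLE (α β : ℝ) (m : ℕ) (F : ℝ → ℝ) : Prop :=
  ∀ q : ℝ[X], q.natDegree ≤ m → ip α β F (q.eval ·) = 0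

lemma OrthDegreeLE.of_jacobiPoly (hα : -1 < α) (hβ : -1 < β) {F : ℝ → ℝ} (hF : Continuous F)
    {m : ℕ} (h : ∀ j ≤ m, ip α β F ((jacobiPoly α β j).eval ·) = 0) : OrthDegreeLE α β m F := by
  intro q hq
  have hmem : q ∈ Submodule.span ℝ (jacobiSequence hα hβ '' Iic m) := by
    rw [(jacobiSequence hα hβ).span_degreeLE fun i _ =>
      (leadingCoeff_ne_zero.2 ((jacobiSequence hα hβ).ne_zero i)).isUnit]
    exact mem_degreeLE.2 (natDegree_le_iff_degree_le.1 hq)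
  have hle : Submodule.span ℝ (jacobiSequence hα hβ '' Iic m) ≤ LinearMap.ker (ipPoly hα hβ hF) :=
    Submodule.span_le.2 (image_subset_iff.2 h)
  exact hle hmem

/-- The partial sum `S_n^{α,β} f` as an element of `ℝ[X]`. -/
def partialSum (α β : ℝ) (n : ℕ) (f : ℝ → ℝ) : ℝ[X] :=
  ∑ k ∈ Finset.range (n + 1), coeff α β k f • jacobiPoly α β k

lemma eval_partialSum (n : ℕ) (f : ℝ → ℝ) : ((partialSum α β n f).eval ·) = S α β n f := by
  ext x
  simp only [partialSum, S, eval_finsetSum, eval_smul, smul_eq_mul, ← eval_jacobiPoly]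

lemma natDegree_partialSum_le (hα : -1 < α) (hβ : -1 < β) (n : ℕ) (f : ℝ → ℝ) :
    (partialSum α β n f).natDegree ≤ n :=
  natDegree_sum_le_of_forall_le _ _ fun k hk => (natDegree_smul_le _ _).trans <| by
    rw [natDegree_jacobiPoly hα hβ]
    exact Finset.mem_range_succ_iff.1 hk

lemma ip_jacobiPoly (hα : -1 < α) (hβ : -1 < β) (f : ℝ → ℝ) (n : ℕ) :
    ip α β f ((jacobiPoly α β n).eval ·) = coeff α β n f * hJ α β n := by
  rw [coeff, div_mul_cancel₀ _ (hJ_pos hα hβ n).ne', eval_jacobiPoly]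

lemma ip_partialSum_jacobiPoly (hα : -1 < α) (hβ : -1 < β) (f : ℝ → ℝ) {n j : ℕ} (hj : j ≤ n) :
    ip α β ((partialSum α β n f).eval ·) ((jacobiPoly α β j).eval ·) =
      coeff α β j f * hJ α β j := by
  rw [ip_comm, partialSum, ip_eval_sum_smul hα hβ (jacobiPoly α β j).continuous,
    Finset.sum_eq_single j, ip_jacobiPoly_eq_hJ]
  · intro k _ hkj
    rw [ip_jacobiPoly_of_ne hα hβ hkj.symm, mul_zero]
  · exact fun hjn => absurd (Finset.mem_range_succ_iff.2 hj) hjn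

theorem orthDegreeLE_sub_partialSum (hα : -1 < α) (hβ : -1 < β) {f : ℝ → ℝ} (hf : Continuous f)
    (n : ℕ) : OrthDegreeLE α β n (f - ((partialSum α β n f).eval ·)) :=
  .of_jacobiPoly hα hβ (by fun_prop) fun j hj => by
    rw [ip_sub_left hα hβ hf (by fun_prop) (by fun_prop), ip_jacobiPoly hα hβ,
      ip_partialSum_jacobiPoly hα hβ f hj, sub_self]

theorem OrthDegreeLE.ip_sub_self_le (hα : -1 < α) (hβ : -1 < β) {g : ℝ → ℝ} (hg : Continuous g)
    {m : ℕ} {p q : ℝ[X]} (hp : p.natDegree ≤ m) (h : OrthDegreeLE α β m (g - (p.eval ·)))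
    (hq : q.natDegree ≤ m) :
    ip α β (g - (p.eval ·)) (g - (p.eval ·)) ≤ ip α β (g - (q.eval ·)) (g - (q.eval ·)) := by
  have hpq : ip α β (g - (p.eval ·)) ((p - q).eval ·) = 0 :=
    h _ (natDegree_sub_le_iff_left hq |>.2 hp)
  have hsplit : g - (q.eval ·) = g - (p.eval ·) + ((p - q).eval ·) := by
    ext x
    simp
  rw [hsplit, ip_add_self_of_ip_eq_zero hα hβ (by fun_prop) (by fun_prop) hpq]
  exact le_add_of_nonneg_right (ip_self_nonneg _)

lemma ip_self_eq_add_partialSum (hα : -1 < α) (hβ : -1 < β) {f : ℝ → ℝ} (hf : Continuous f)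
    (n : ℕ) :
    ip α β f f =
      ip α β (f - ((partialSum α β n f).eval ·)) (f - ((partialSum α β n f).eval ·)) +
        ip α β ((partialSum α β n f).eval ·) ((partialSum α β n f).eval ·) := by
  rw [← ip_add_self_of_ip_eq_zero hα hβ (by fun_prop) (by fun_prop)
    (orthDegreeLE_sub_partialSum hα hβ hf n _ (natDegree_partialSum_le hα hβ n f)),
    sub_add_cancel]

theorem tendsto_ip_partialSum_self (hα : -1 < α) (hβ : -1 < β) {f : ℝ → ℝ} (hf : Continuous f) :
    Tendsto (fun n => ip α β ((partialSum α β n f).eval ·) ((partialSum α β n f).eval ·)) atTop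
      (𝓝 (ip α β f f)) := by
  refine Metric.tendsto_atTop.2 fun ε hε => ?_
  obtain ⟨q, hq⟩ := exists_ip_sub_eval_lt hα hβ hf hε
  refine ⟨q.natDegree, fun n hn => ?_⟩
  have hbest := OrthDegreeLE.ip_sub_self_le hα hβ hf (natDegree_partialSum_le hα hβ n f)
    (orthDegreeLE_sub_partialSum hα hβ hf n) hn
  rw [Real.dist_eq, abs_sub_comm, ip_self_eq_add_partialSum hα hβ hf n, add_sub_cancel_right,
    abs_of_nonneg (ip_self_nonneg _)]
  exact hbest.trans_lt hq

/-! ### The weighted Poincaré inequality -/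

lemma ip_partialSum_self (hα : -1 < α) (hβ : -1 < β) (f : ℝ → ℝ) (n : ℕ) :
    ip α β ((partialSum α β n f).eval ·) ((partialSum α β n f).eval ·) =
      ∑ k ∈ Finset.range (n + 1), coeff α β k f * (coeff α β k f * hJ α β k) := by
  nth_rw 2 [partialSum]
  rw [ip_eval_sum_smul hα hβ (by fun_prop)]
  refine Finset.sum_congr rfl fun k hk => ?_
  rw [ip_partialSum_jacobiPoly hα hβ f (Finset.mem_range_succ_iff.1 hk)]

lemma ip_derivative_partialSum_self (hα : -1 < α) (hβ : -1 < β) (f : ℝ → ℝ) (n : ℕ) :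
    ip (α + 1) (β + 1) ((derivative (partialSum α β n f)).eval ·)
        ((derivative (partialSum α β n f)).eval ·) =
      ∑ k ∈ Finset.range (n + 1),
        coeff α β k f * (jacobiEigenvalue α β k * (coeff α β k f * hJ α β k)) := by
  rw [ip_derivative_derivative hα hβ]
  nth_rw 2 [partialSum]
  simp only [map_sum, map_smul]
  rw [ip_eval_sum_smul hα hβ (by fun_prop)]
  refine Finset.sum_congr rfl fun k hk => ?_
  rw [ip_jacobiOp_jacobiPoly hα,
    ip_partialSum_jacobiPoly hα hβ f (Finset.mem_range_succ_iff.1 hk)]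

lemma OrthDegreeLE.coeff_eq_zero (hα : -1 < α) (hβ : -1 < β) {F : ℝ → ℝ} {m k : ℕ}
    (h : OrthDegreeLE α β m F) (hk : k ≤ m) : coeff α β k F = 0 := by
  rw [coeff, ← eval_jacobiPoly, h _ (by rwa [natDegree_jacobiPoly hα hβ]), zero_div]

lemma OrthDegreeLE.jacobiEigenvalue_mul_ip_partialSum_le (hα : -1 < α) (hβ : -1 < β) {F : ℝ → ℝ}
    {m : ℕ} (h : OrthDegreeLE α β m F) (n : ℕ) :
    jacobiEigenvalue α β (m + 1) *
        ip α β ((partialSum α β n F).eval ·) ((partialSum α β n F).eval ·) ≤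
      ip (α + 1) (β + 1) ((derivative (partialSum α β n F)).eval ·)
        ((derivative (partialSum α β n F)).eval ·) := by
  rw [ip_partialSum_self hα hβ, ip_derivative_partialSum_self hα hβ, Finset.mul_sum]
  refine Finset.sum_le_sum fun k _ => ?_
  obtain hk | hk := Nat.lt_or_ge m k
  · calc jacobiEigenvalue α β (m + 1) * (coeff α β k F * (coeff α β k F * hJ α β k))
        = jacobiEigenvalue α β (m + 1) * (coeff α β k F ^ 2 * hJ α β k) := by ring
      _ ≤ jacobiEigenvalue α β k * (coeff α β k F ^ 2 * hJ α β k) :=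
        mul_le_mul_of_nonneg_right ((jacobiEigenvalue_strictMono hα hβ).monotone hk)
          (mul_nonneg (sq_nonneg _) (hJ_pos hα hβ k).le)
      _ = coeff α β k F * (jacobiEigenvalue α β k * (coeff α β k F * hJ α β k)) := by ring
  · simp [h.coeff_eq_zero hα hβ hk]

lemma ip_derivative_partialSum_le (hα : -1 < α) (hβ : -1 < β) {F : ℝ → ℝ} (hF : ContDiff ℝ 1 F)
    (n : ℕ) :
    ip (α + 1) (β + 1) ((derivative (partialSum α β n F)).eval ·)
        ((derivative (partialSum α β n F)).eval ·) ≤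
      ip (α + 1) (β + 1) (deriv F) (deriv F) := by
  set P := partialSum α β n F
  have hα' : -1 < α + 1 := by linarith
  have hβ' : -1 < β + 1 := by linarith
  have hF' : Continuous (deriv F) := hF.continuous_deriv_one
  have horth :
      ip (α + 1) (β + 1) (deriv F - ((derivative P).eval ·)) ((derivative P).eval ·) = 0 := by
    rw [ip_sub_left hα' hβ' hF' (by fun_prop) (by fun_prop), ip_deriv_derivative hα hβ hF,
      ip_derivative_derivative hα hβ, ← ip_sub_left hα hβ hF.continuous (by fun_prop) (by fun_prop)]
    exact orthDegreeLE_sub_partialSum hα hβ hF.continuous n _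
      ((natDegree_jacobiOp_le P).trans (natDegree_partialSum_le hα hβ n F))
  calc ip (α + 1) (β + 1) ((derivative P).eval ·) ((derivative P).eval ·)
      ≤ ip (α + 1) (β + 1) (deriv F - ((derivative P).eval ·)) (deriv F - ((derivative P).eval ·)) +
          ip (α + 1) (β + 1) ((derivative P).eval ·) ((derivative P).eval ·) :=
        le_add_of_nonneg_left (ip_self_nonneg _)
    _ = ip (α + 1) (β + 1) (deriv F) (deriv F) := by
        rw [← ip_add_self_of_ip_eq_zero hα' hβ' (by fun_prop) (by fun_prop) horth, sub_add_cancel]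

theorem OrthDegreeLE.jacobiEigenvalue_mul_ip_self_le (hα : -1 < α) (hβ : -1 < β) {F : ℝ → ℝ}
    (hF : ContDiff ℝ 1 F) {m : ℕ} (h : OrthDegreeLE α β m F) :
    jacobiEigenvalue α β (m + 1) * ip α β F F ≤ ip (α + 1) (β + 1) (deriv F) (deriv F) :=
  le_of_tendsto' ((tendsto_ip_partialSum_self hα hβ hF.continuous).const_mul _) fun n =>
    (h.jacobiEigenvalue_mul_ip_partialSum_le hα hβ n).trans (ip_derivative_partialSum_le hα hβ hF n)

/-! ### Orthogonality of derivatives -/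

lemma exists_derivative_eq {K : Type*} [Field K] [CharZero K] (q : K[X]) :
    ∃ p : K[X], derivative p = q ∧ p.natDegree ≤ q.natDegree + 1 := by
  refine ⟨∑ i ∈ Finset.range (q.natDegree + 1), monomial (i + 1) (q.coeff i / (i + 1)), ?_, ?_⟩
  · conv_rhs => rw [q.as_sum_range]
    rw [derivative_sum]
    refine Finset.sum_congr rfl fun i _ => ?_
    rw [derivative_monomial_succ, div_mul_cancel₀ _ i.cast_add_one_ne_zero]
  · refine natDegree_sum_le_of_forall_le _ _ fun i hi => (natDegree_monomial_le _).trans ?_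
    exact Finset.mem_range.1 hi

protected theorem OrthDegreeLE.deriv (hα : -1 < α) (hβ : -1 < β) {F : ℝ → ℝ}
    (hF : ContDiff ℝ 1 F) {m : ℕ} (h : OrthDegreeLE α β (m + 1) F) :
    OrthDegreeLE (α + 1) (β + 1) m (deriv F) := by
  intro q hq
  obtain ⟨p, rfl, hp⟩ := exists_derivative_eq q
  rw [ip_deriv_derivative hα hβ hF]
  exact h _ ((natDegree_jacobiOp_le p).trans (hp.trans (Nat.succ_le_succ hq)))

lemma contDiff_one_iteratedDeriv {F : ℝ → ℝ} {j : ℕ} (hF : ContDiff ℝ (j + 1 : ℕ) F) :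
    ContDiff ℝ 1 (iteratedDeriv j F) := by
  rw [iteratedDeriv_eq_iterate]
  exact hF.of_le (by norm_cast; omega) |>.iterate_deriv' 1 j

protected theorem OrthDegreeLE.iteratedDeriv (hα : -1 < α) (hβ : -1 < β) {F : ℝ → ℝ} {n j : ℕ}
    (hF : ContDiff ℝ j F) (hj : j ≤ n) (h : OrthDegreeLE α β n F) :
    OrthDegreeLE (α + j) (β + j) (n - j) (iteratedDeriv j F) := by
  induction j with
  | zero => simpa using h
  | succ j ih =>
    have hj' : n - j = n - (j + 1) + 1 := by omega
    have hih := ih (hF.of_le (by norm_cast; omega)) (by omega)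
    rw [hj'] at hih
    rw [iteratedDeriv_succ, Nat.cast_succ, ← add_assoc, ← add_assoc]
    exact hih.deriv (by linarith [j.cast_nonneg (α := ℝ)]) (by linarith [j.cast_nonneg (α := ℝ)])
      (contDiff_one_iteratedDeriv hF)

/-! ### Norm estimates -/

lemma LpW_two (g : ℝ → ℝ) : LpW α β 2 g = √(ip α β g g) := by
  rw [LpW, if_neg ENNReal.ofNat_ne_top, Real.sqrt_eq_rpow]
  simp [ip, ← pow_two]

lemma LpW_two_sqrt_pow_mul (k : ℕ) (g : ℝ → ℝ) :
    LpW α β 2 (fun x => √(1 - x ^ 2) ^ k * g x) = LpW (α + k) (β + k) 2 g := by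
  rw [LpW_two, LpW_two]
  congr 1
  refine setIntegral_congr_fun measurableSet_Ioo fun x hx => ?_
  have hsqrt : √(1 - x ^ 2) ^ k * √(1 - x ^ 2) ^ k = (1 - x ^ 2) ^ k := by
    rw [← mul_pow, Real.mul_self_sqrt (by nlinarith [hx.1, hx.2])]
  simp only [w_add_natCast k hx, ← hsqrt]
  ring

lemma LpW_two_add_natCast_le (hα : -1 < α) (hβ : -1 < β) {g : ℝ → ℝ} (hg : Continuous g) (k : ℕ) :
    LpW (α + k) (β + k) 2 g ≤ LpW α β 2 g := by
  rw [← LpW_two_sqrt_pow_mul, LpW_two, LpW_two]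
  refine Real.sqrt_le_sqrt (ip_self_le_of_abs_le hα hβ (by fun_prop) hg fun x _ => ?_)
  rw [abs_mul, abs_of_nonneg (by positivity)]
  exact mul_le_of_le_one_left (abs_nonneg _)
    (pow_le_one₀ (Real.sqrt_nonneg _) (Real.sqrt_le_one.2 (by linarith [sq_nonneg x])))

lemma le_E_two {m : ℕ} {g : ℝ → ℝ} {a : ℝ}
    (h : ∀ q : ℝ[X], q.natDegree ≤ m → a ≤ LpW α β 2 (g - (q.eval ·))) : a ≤ E α β 2 m g :=
  le_csInf ⟨_, 0, by simp, rfl⟩ fun _ ⟨q, hq, hr⟩ => hr ▸ h q hq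

lemma E_two_le {m : ℕ} (g : ℝ → ℝ) {q : ℝ[X]} (hq : q.natDegree ≤ m) :
    E α β 2 m g ≤ LpW α β 2 (g - (q.eval ·)) :=
  csInf_le ⟨0, fun _ ⟨_, _, hr⟩ => hr ▸ LpW_two (α := α) (β := β) _ ▸ Real.sqrt_nonneg _⟩
    ⟨q, hq, rfl⟩

lemma OrthDegreeLE.LpW_sub_le_E (hα : -1 < α) (hβ : -1 < β) {g : ℝ → ℝ} (hg : Continuous g)
    {m : ℕ} {p : ℝ[X]} (hp : p.natDegree ≤ m) (h : OrthDegreeLE α β m (g - (p.eval ·))) :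
    LpW α β 2 (g - (p.eval ·)) ≤ E α β 2 m g :=
  le_E_two fun q hq => by
    rw [LpW_two, LpW_two]
    exact Real.sqrt_le_sqrt (OrthDegreeLE.ip_sub_self_le hα hβ hg hp h hq)

lemma E_two_add_natCast_le (hα : -1 < α) (hβ : -1 < β) {g : ℝ → ℝ} (hg : Continuous g) (k m : ℕ) :
    E (α + k) (β + k) 2 m g ≤ E α β 2 m g :=
  le_E_two fun q hq => (E_two_le g hq).trans (LpW_two_add_natCast_le hα hβ (by fun_prop) k)

lemma sq_le_mul_jacobiEigenvalue (hα : -1 < α) (hβ : -1 < β) {k n : ℕ} (hk : k ≤ n) :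
    (n : ℝ) ^ 2 ≤ (k + 1) * jacobiEigenvalue (α + k) (β + k) (n - k + 1) := by
  obtain ⟨m, rfl⟩ := Nat.exists_eq_add_of_le hk
  simp only [jacobiEigenvalue, Nat.add_sub_cancel_left, Nat.cast_add, Nat.cast_one]
  calc (k + m : ℝ) ^ 2 = (k + m) * (k + m) := sq _
    _ ≤ ((k + 1) * (m + 1)) * (m + 1 + (α + k) + (β + k) + 1) :=
      mul_le_mul (by nlinarith [k.cast_nonneg (α := ℝ), m.cast_nonneg (α := ℝ)])
        (by linarith [k.cast_nonneg (α := ℝ)]) (by positivity) (by positivity)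
    _ = (k + 1) * ((m + 1) * (m + 1 + (α + k) + (β + k) + 1)) := by ring

theorem OrthDegreeLE.pow_mul_ip_iteratedDeriv_le (hα : -1 < α) (hβ : -1 < β) {F : ℝ → ℝ}
    {n k d : ℕ} (hF : ContDiff ℝ (k + d : ℕ) F) (hn : k + d ≤ n) (h : OrthDegreeLE α β n F) :
    ((n : ℝ) ^ 2) ^ d *
        (k.factorial * ip (α + k) (β + k) (iteratedDeriv k F) (iteratedDeriv k F)) ≤
      (k + d).factorial *
        ip (α + (k + d : ℕ)) (β + (k + d : ℕ)) (iteratedDeriv (k + d) F)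
          (iteratedDeriv (k + d) F) := by
  induction d with
  | zero => simp
  | succ d ih =>
    rw [← add_assoc] at hF hn ⊢
    have hFj : ContDiff ℝ (k + d : ℕ) F := hF.of_le (by norm_cast; omega)
    specialize ih hFj (by omega)
    generalize k + d = j at *
    have hjα : -1 < α + j := by linarith [j.cast_nonneg (α := ℝ)]
    have hjβ : -1 < β + j := by linarith [j.cast_nonneg (α := ℝ)]
    have hpoincare := (h.iteratedDeriv hα hβ hFj (by omega)).jacobiEigenvalue_mul_ip_self_le
      hjα hjβ (contDiff_one_iteratedDeriv hF)
    rw [← iteratedDeriv_succ, add_assoc α, add_assoc β, ← Nat.cast_succ] at hpoincare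
    set I := ip (α + j) (β + j) (iteratedDeriv j F) (iteratedDeriv j F)
    have hI0 : 0 ≤ I := ip_self_nonneg _
    calc ((n : ℝ) ^ 2) ^ (d + 1) *
          (k.factorial * ip (α + k) (β + k) (iteratedDeriv k F) (iteratedDeriv k F))
        ≤ (n : ℝ) ^ 2 * (j.factorial * I) := by
          rw [pow_succ', mul_assoc]
          gcongr
      _ ≤ (j + 1) * jacobiEigenvalue (α + j) (β + j) (n - j + 1) * (j.factorial * I) := by
          gcongr
          exact sq_le_mul_jacobiEigenvalue hα hβ (by omega)
      _ = (j + 1).factorial * (jacobiEigenvalue (α + j) (β + j) (n - j + 1) * I) := by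
          rw [Nat.factorial_succ, Nat.cast_mul, Nat.cast_succ]
          ring
      _ ≤ (j + 1).factorial * ip (α + (j + 1 : ℕ)) (β + (j + 1 : ℕ)) (iteratedDeriv (j + 1) F)
            (iteratedDeriv (j + 1) F) := by
          gcongr

lemma OrthDegreeLE.pow_mul_LpW_iteratedDeriv_le (hα : -1 < α) (hβ : -1 < β) {F : ℝ → ℝ}
    {n k r : ℕ} (hF : ContDiff ℝ r F) (hk : k ≤ r) (hr : r ≤ n) (h : OrthDegreeLE α β n F) :
    (n : ℝ) ^ (r - k) * LpW (α + k) (β + k) 2 (iteratedDeriv k F) ≤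
      √r.factorial * LpW (α + r) (β + r) 2 (iteratedDeriv r F) := by
  obtain ⟨d, rfl⟩ := Nat.exists_eq_add_of_le hk
  have hsq := h.pow_mul_ip_iteratedDeriv_le hα hβ hF hr
  have hfact : (1 : ℝ) ≤ k.factorial := mod_cast k.factorial_pos
  rw [Nat.add_sub_cancel_left, LpW_two, LpW_two, ← Real.sqrt_mul (by positivity)]
  refine Real.le_sqrt_of_sq_le (le_trans ?_ hsq)
  rw [mul_pow, Real.sq_sqrt (ip_self_nonneg _), pow_right_comm]
  gcongr
  exact le_mul_of_one_le_left (ip_self_nonneg _) hfact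

/-! ### The main estimate -/

lemma iteratedDeriv_eval (p : ℝ[X]) (k : ℕ) :
    iteratedDeriv k (p.eval ·) = ((derivative^[k] p).eval ·) := by
  have hsemiconj : Function.Semiconj (fun p : ℝ[X] => (p.eval ·)) derivative deriv :=
    fun p => funext fun _ => p.deriv.symm
  rw [iteratedDeriv_eq_iterate, ← hsemiconj.iterate_right k]

lemma iteratedDeriv_sub_eval {f : ℝ → ℝ} {k : ℕ} (hf : ContDiff ℝ k f) (p : ℝ[X]) :
    iteratedDeriv k (f - (p.eval ·)) = iteratedDeriv k f - ((derivative^[k] p).eval ·) := by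
  ext x
  rw [iteratedDeriv_sub hf.contDiffAt (contDiff_eval p k).contDiffAt, iteratedDeriv_eval,
    Pi.sub_apply]

lemma LpW_iteratedDeriv_sub_partialSum_le_E (hα : -1 < α) (hβ : -1 < β) {f : ℝ → ℝ} {r n : ℕ}
    (hf : ContDiff ℝ r f) (hr : r ≤ n) :
    LpW (α + r) (β + r) 2 (iteratedDeriv r (f - ((partialSum α β n f).eval ·))) ≤
      E (α + r) (β + r) 2 (n - r) (iteratedDeriv r f) := by
  have horth : OrthDegreeLE (α + r) (β + r) (n - r)
      (iteratedDeriv r (f - ((partialSum α β n f).eval ·))) :=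
    (orthDegreeLE_sub_partialSum hα hβ hf.continuous n).iteratedDeriv hα hβ
      (hf.sub (contDiff_eval _ _)) hr
  rw [iteratedDeriv_sub_eval hf] at horth ⊢
  exact horth.LpW_sub_le_E (by linarith [r.cast_nonneg (α := ℝ)])
    (by linarith [r.cast_nonneg (α := ℝ)]) (hf.continuous_iteratedDeriv r le_rfl)
    ((natDegree_iterate_derivative _ r).trans
      (Nat.sub_le_sub_right (natDegree_partialSum_le hα hβ n f) r))

theorem statement6_general (hα : -1 < α) (hβ : -1 < β) {f : ℝ → ℝ} {r n k : ℕ}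
    (hf : ContDiff ℝ r f) (hr : r ≤ n) (hk : k ≤ r) :
    LpW α β 2 (fun x => √(1 - x ^ 2) ^ k * (iteratedDeriv k f x - iteratedDeriv k (S α β n f) x))
      ≤ √r.factorial * (n : ℝ) ^ ((k : ℝ) - r) *
        E (α + r) (β + r) 2 (n - r) (iteratedDeriv r f) := by
  set P := partialSum α β n f
  have hremainder : (fun x => iteratedDeriv k f x - iteratedDeriv k (S α β n f) x) =
      iteratedDeriv k (f - (P.eval ·)) := by
    rw [iteratedDeriv_sub_eval (hf.of_le (mod_cast hk)), ← iteratedDeriv_eval, eval_partialSum]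
    rfl
  have hn : (n : ℝ) ^ (r - k) ≠ 0 := by
    refine (pow_eq_zero_iff' (M₀ := ℝ)).not.2 fun ⟨h0, hrk⟩ => hrk ?_
    rw [Nat.cast_eq_zero] at h0
    omega
  have hexp : (n : ℝ) ^ ((k : ℝ) - r) = ((n : ℝ) ^ (r - k))⁻¹ := by
    rw [← neg_sub, ← Nat.cast_sub hk, Real.rpow_neg n.cast_nonneg, Real.rpow_natCast]
  calc LpW α β 2 (fun x => √(1 - x ^ 2) ^ k *
          (iteratedDeriv k f x - iteratedDeriv k (S α β n f) x))
      = ((n : ℝ) ^ (r - k))⁻¹ *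
          ((n : ℝ) ^ (r - k) * LpW (α + k) (β + k) 2 (iteratedDeriv k (f - (P.eval ·)))) := by
        rw [LpW_two_sqrt_pow_mul, hremainder, inv_mul_cancel_left₀ hn]
    _ ≤ ((n : ℝ) ^ (r - k))⁻¹ *
          (√r.factorial * LpW (α + r) (β + r) 2 (iteratedDeriv r (f - (P.eval ·)))) := by
        refine mul_le_mul_of_nonneg_left ?_ (by positivity)
        exact (orthDegreeLE_sub_partialSum hα hβ hf.continuous n).pow_mul_LpW_iteratedDeriv_le hα hβ
          (hf.sub (contDiff_eval _ _)) hk hr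
    _ ≤ ((n : ℝ) ^ (r - k))⁻¹ *
          (√r.factorial * E (α + r) (β + r) 2 (n - r) (iteratedDeriv r f)) := by
        gcongr
        exact LpW_iteratedDeriv_sub_partialSum_le_E hα hβ hf hr
    _ = √r.factorial * (n : ℝ) ^ ((k : ℝ) - r) *
          E (α + r) (β + r) 2 (n - r) (iteratedDeriv r f) := by
        rw [hexp]
        ring

end

theorem statement6 (α β : ℝ) (hα : -1 < α) (hβ : -1 < β) (r s : ℕ) (hsr : s ≤ r) :
    ∃ c : ℝ, 0 < c ∧ ∀ f : ℝ → ℝ, ContDiff ℝ (r : ℕ∞) f →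
      IntegrableOn (fun x => |iteratedDeriv r f x| ^ (2 : ℝ) * w α β x) (Ioo (-1 : ℝ) 1) →
      ∀ n : ℕ, r ≤ n → ∀ k : ℕ, k ≤ s →
        LpW α β 2 (fun x =>
            Real.sqrt (1 - x ^ 2) ^ k * (iteratedDeriv k f x - iteratedDeriv k (S α β n f) x))
          ≤ c * (n : ℝ) ^ ((k : ℝ) - (r : ℝ)) * E α β 2 (n - r) (iteratedDeriv r f) := by
  refine ⟨√r.factorial, by positivity, fun f hf _ n hn k hk => ?_⟩
  refine (statement6_general hα hβ (mod_cast hf) hn (hk.trans hsr)).trans ?_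
  exact mul_le_mul_of_nonneg_left
    (E_two_add_natCast_le hα hβ (hf.continuous_iteratedDeriv r le_rfl) r _) (by positivity)

end JacobiApprox
end
end

section
/- Let α, β > -1, s ∈ ℕ, θ ∈ [-1,1], 1 ≤ p ≤ ∞, and let f ∈ W_p^s(w_{α,β}) (f ∈ C^s[-1,1] when p = ∞). Then the Fourier coefficients of f in the Sobolev orthogonal system satisfy: \hat{𝔣}_n^{α-s,β-s} = f^{(n)}(θ) for 0 ≤ n ≤ s-1, and \hat{𝔣}_n^{α-s,β-s} = \widehat{(f^{(s)})}_{n-s}^{α,β} (the (n-s)-th Fourier–Jacobi coefficient of f^{(s)} with respect to w_{α,β}) for n ≥ s. -/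
open MeasureTheory Set ENNReal NNReal

noncomputable section

namespace JacobiApprox

/-!
The system `SJ` is built from two kinds of functions on which the Sobolev product degenerates.
The Taylor monomial of degree `n < s` at `θ` is killed by `d^s/dx^s`, and its `k`-th derivative at
`θ` is `1` if `k = n` and `0` otherwise, so the product with it sees only the `n`-th derivative at
`θ`. By Cauchy's formula for repeated integration the remaining functions are `s`-fold primitives
of the `J_{n-s}` based at `θ`, whose derivatives of order below `s` vanish at `θ`, so the product with
them sees only the weighted integral. In both cases numerator and denominator of the Fourier
coefficient collapse to a single term.
-/

section IteratedPrimitive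

variable {E : Type*} [NormedAddCommGroup E] [NormedSpace ℝ E]

/-- The `(m + 1)`-fold primitive of `g` based at `θ`, written as a single integral by means of
Cauchy's formula for repeated integration. The index `m` is the exponent of the kernel. -/
def iteratedPrimitive (θ : ℝ) (m : ℕ) (g : ℝ → E) (x : ℝ) : E :=
  ∫ t in θ..x, ((x - t) ^ m / m.factorial : ℝ) • g t

theorem iteratedPrimitive_zero (θ : ℝ) (g : ℝ → E) :
    iteratedPrimitive θ 0 g = fun x => ∫ t in θ..x, g t := by
  funext x
  simp [iteratedPrimitive]

theorem iteratedPrimitive_self (θ : ℝ) (m : ℕ) (g : ℝ → E) : iteratedPrimitive θ m g θ = 0 :=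
  intervalIntegral.integral_same

theorem hasDerivAt_cauchyKernel (x t : ℝ) (m : ℕ) :
    HasDerivAt (fun t => (x - t) ^ (m + 1) / (m + 1).factorial)
      (-((x - t) ^ m / m.factorial)) t := by
  refine ((((hasDerivAt_id t).const_sub x).pow (m + 1)).div_const _).congr_deriv ?_
  simp only [id, Nat.factorial_succ, Nat.add_sub_cancel]
  push_cast
  field_simp

variable [CompleteSpace E] {g : ℝ → E} (hg : Continuous g) (θ : ℝ)
include hg

theorem hasDerivAt_iteratedPrimitive_zero (x : ℝ) :
    HasDerivAt (iteratedPrimitive θ 0 g) (g x) x := by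
  rw [iteratedPrimitive_zero]
  exact hg.integral_hasStrictDerivAt θ x |>.hasDerivAt

theorem continuous_iteratedPrimitive_zero : Continuous (iteratedPrimitive θ 0 g) :=
  continuous_iff_continuousAt.2 fun x => (hasDerivAt_iteratedPrimitive_zero hg θ x).continuousAt

theorem iteratedPrimitive_succ (m : ℕ) :
    iteratedPrimitive θ (m + 1) g = iteratedPrimitive θ m (iteratedPrimitive θ 0 g) := by
  funext x
  have parts := intervalIntegral.integral_smul_deriv_eq_deriv_smul (a := θ) (b := x)
    (fun t _ => hasDerivAt_cauchyKernel x t m)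
    (fun t _ => hasDerivAt_iteratedPrimitive_zero hg θ t)
    (Continuous.intervalIntegrable (by fun_prop) _ _) (hg.intervalIntegrable _ _)
  -- The boundary terms vanish: the kernel at `t = x` and the primitive at `t = θ`.
  simp only [sub_self, zero_pow m.succ_ne_zero, zero_div, zero_smul, iteratedPrimitive_self,
    smul_zero, neg_smul, intervalIntegral.integral_neg, sub_neg_eq_add, zero_add] at parts
  exact parts

theorem deriv_iteratedPrimitive_succ (m : ℕ) :
    deriv (iteratedPrimitive θ (m + 1) g) = iteratedPrimitive θ m g := by
  induction m generalizing g with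
  | zero =>
    rw [iteratedPrimitive_succ hg]
    exact funext fun x => (hasDerivAt_iteratedPrimitive_zero
      (continuous_iteratedPrimitive_zero hg θ) θ x).deriv
  | succ m ih =>
    rw [iteratedPrimitive_succ hg, ih (continuous_iteratedPrimitive_zero hg θ),
      iteratedPrimitive_succ hg]

theorem iteratedDeriv_iteratedPrimitive_add (m k : ℕ) :
    iteratedDeriv k (iteratedPrimitive θ (m + k) g) = iteratedPrimitive θ m g := by
  induction k with
  | zero => simp
  | succ k ih => rw [iteratedDeriv_succ', ← add_assoc, deriv_iteratedPrimitive_succ hg, ih]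

theorem iteratedDeriv_succ_iteratedPrimitive (m : ℕ) :
    iteratedDeriv (m + 1) (iteratedPrimitive θ m g) = g := by
  have drop_to_zero := iteratedDeriv_iteratedPrimitive_add hg θ 0 m
  rw [zero_add] at drop_to_zero
  rw [iteratedDeriv_succ, drop_to_zero]
  exact funext fun x => (hasDerivAt_iteratedPrimitive_zero hg θ x).deriv

theorem iteratedDeriv_iteratedPrimitive_self {k m : ℕ} (hk : k ≤ m) :
    iteratedDeriv k (iteratedPrimitive θ m g) θ = 0 := by
  obtain ⟨j, rfl⟩ := Nat.exists_eq_add_of_le' hk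
  rw [iteratedDeriv_iteratedPrimitive_add hg, iteratedPrimitive_self]

end IteratedPrimitive

section TaylorMonomial

variable {𝕜 : Type*} [NontriviallyNormedField 𝕜]

/-- The Taylor monomial `(x - θ)^n / n!` of degree `n` at `θ`. -/
def taylorMonomial (θ : 𝕜) (n : ℕ) (x : 𝕜) : 𝕜 := (x - θ) ^ n / n.factorial

theorem iteratedDeriv_taylorMonomial (θ : 𝕜) (n k : ℕ) (x : 𝕜) :
    iteratedDeriv k (taylorMonomial θ n) x =
      n.descFactorial k * (x - θ) ^ (n - k) / n.factorial := by
  unfold taylorMonomial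
  simp only [iteratedDeriv_div_const, iteratedDeriv_comp_sub_const k (· ^ n) θ, iteratedDeriv_pow]

theorem iteratedDeriv_taylorMonomial_of_lt (θ : 𝕜) {n k : ℕ} (h : n < k) :
    iteratedDeriv k (taylorMonomial θ n) = 0 := by
  funext x
  simp [iteratedDeriv_taylorMonomial, Nat.descFactorial_eq_zero_iff_lt.2 h]

theorem iteratedDeriv_taylorMonomial_self [CharZero 𝕜] (θ : 𝕜) (n k : ℕ) :
    iteratedDeriv k (taylorMonomial θ n) θ = if k = n then 1 else 0 := by
  unfold taylorMonomial
  simp only [iteratedDeriv_div_const, iteratedDeriv_comp_sub_const k (· ^ n) θ, sub_self,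
    iteratedDeriv_fun_pow_zero]
  split_ifs <;> simp [n.factorial_ne_zero]

end TaylorMonomial

theorem ipS_taylorMonomial (α β : ℝ) {s n : ℕ} (hn : n < s) (θ : ℝ) (lam : ℕ → ℝ) (f : ℝ → ℝ) :
    ipS α β s θ lam f (taylorMonomial θ n) = lam n * iteratedDeriv n f θ := by
  simp [ipS, ip, iteratedDeriv_taylorMonomial_of_lt θ hn, iteratedDeriv_taylorMonomial_self, hn]

theorem ipS_iteratedPrimitive (α β : ℝ) (m : ℕ) (θ : ℝ) (lam : ℕ → ℝ) (f : ℝ → ℝ) {g : ℝ → ℝ}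
    (hg : Continuous g) :
    ipS α β (m + 1) θ lam f (iteratedPrimitive θ m g) = ip α β (iteratedDeriv (m + 1) f) g := by
  have point_terms : ∑ k ∈ Finset.range (m + 1),
      lam k * iteratedDeriv k f θ * iteratedDeriv k (iteratedPrimitive θ m g) θ = 0 :=
    Finset.sum_eq_zero fun k hk => by
      rw [iteratedDeriv_iteratedPrimitive_self hg θ (Finset.mem_range_succ_iff.1 hk), mul_zero]
  rw [ipS, point_terms, add_zero, iteratedDeriv_succ_iteratedPrimitive hg]

theorem continuous_J (α β : ℝ) (n : ℕ) : Continuous (J α β n) := by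
  unfold J JP
  fun_prop

theorem SJ_of_lt (α β : ℝ) {s n : ℕ} (hn : n < s) (θ : ℝ) :
    SJ α β s θ n = taylorMonomial θ n :=
  funext fun _ => if_pos hn

theorem SJ_of_le (α β : ℝ) {s n : ℕ} (hn : s ≤ n) (θ : ℝ) :
    SJ α β s θ n = iteratedPrimitive θ (s - 1) (J α β (n - s)) :=
  funext fun _ => if_neg hn.not_gt

theorem coeffS_of_lt (α β : ℝ) {s n : ℕ} (hn : n < s) (θ : ℝ) {lam : ℕ → ℝ} (hlam : lam n ≠ 0)
    (f : ℝ → ℝ) : coeffS α β s θ lam n f = iteratedDeriv n f θ := by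
  rw [coeffS, SJ_of_lt α β hn, ipS_taylorMonomial α β hn, ipS_taylorMonomial α β hn,
    iteratedDeriv_taylorMonomial_self, if_pos rfl, mul_one, mul_div_cancel_left₀ _ hlam]

theorem coeffS_of_le (α β : ℝ) {s n : ℕ} (hs : 1 ≤ s) (hn : s ≤ n) (θ : ℝ) (lam : ℕ → ℝ)
    (f : ℝ → ℝ) : coeffS α β s θ lam n f = coeff α β (n - s) (iteratedDeriv s f) := by
  obtain ⟨m, rfl⟩ := Nat.exists_eq_add_of_le' hs
  have hJ_cont := continuous_J α β (n - (m + 1))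
  rw [coeffS, SJ_of_le α β hn, Nat.add_sub_cancel, ipS_iteratedPrimitive α β m θ lam _ hJ_cont,
    ipS_iteratedPrimitive α β m θ lam _ hJ_cont, iteratedDeriv_succ_iteratedPrimitive hJ_cont,
    coeff, hJ]

theorem statement12_general (α β : ℝ) (hα : -1 < α) (hβ : -1 < β) (s : ℕ) (hs : 1 ≤ s) (θ : ℝ)
    (lam : ℕ → ℝ) (hlam : ∀ k, k < s → lam k ≠ 0) (f : ℝ → ℝ)
    (hf : ∀ k, k < s → Differentiable ℝ (iteratedDeriv k f)) :
    (∀ n : ℕ, n < s → coeffS α β s θ lam n f = iteratedDeriv n f θ) ∧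
    (∀ n : ℕ, s ≤ n → coeffS α β s θ lam n f = coeff α β (n - s) (iteratedDeriv s f)) :=
  ⟨fun n hn => coeffS_of_lt α β hn θ (hlam n hn) f, fun _ hn => coeffS_of_le α β hs hn θ lam f⟩

theorem statement12 (α β : ℝ) (hα : -1 < α) (hβ : -1 < β) (s : ℕ) (hs : 1 ≤ s)
    (θ : ℝ) (hθ : θ ∈ Icc (-1 : ℝ) 1) (lam : ℕ → ℝ) (hlam : ∀ k, k < s → 0 < lam k)
    (p : ℝ≥0∞) (hp : 1 ≤ p) (f : ℝ → ℝ) (hf : MemW α β p s f) :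
    (∀ n : ℕ, n < s → coeffS α β s θ lam n f = iteratedDeriv n f θ) ∧
    (∀ n : ℕ, s ≤ n → coeffS α β s θ lam n f = coeff α β (n - s) (iteratedDeriv s f)) :=
  statement12_general α β hα hβ s hs θ lam (fun k hk => (hlam k hk).ne') f fun k hk =>
    hf.1.differentiable_iteratedDeriv k (by exact_mod_cast hk)

end JacobiApprox
end
end
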